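/- arXiv:1810.08863 — 14 statements merged into one kernel-verified Lean document; each statement's English description precedes it below -/
import Mathlib

section
/- For every natural number n ≥ 0, one has 3·J_n + j_n = 2^{n+1}, where J_n is the n-th third-order Jacobsthal number and j_n is the n-th third-order Jacobsthal-Lucas number. -/
/-- The third-order Jacobsthal sequence. -/
def J3 : ℕ → ℤ
  | 0 => 0
  | 1 => 1
  | 2 => 1
  | n + 3 => J3 (n + 2) + J3 (n + 1) + 2 * J3 n

/-- The third-order Jacobsthal-Lucas sequence. -/
def j3 : ℕ → ℤ
  | 0 => 2
  | 1 => 1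
  | 2 => 5
  | n + 3 => j3 (n + 2) + j3 (n + 1) + 2 * j3 n

theorem stmt_0 (n : ℕ) : 3 * J3 n + j3 n = 2 ^ (n + 1) := by
  -- Both sides satisfy the third-order recurrence (as `2 ^ 3 = 2 ^ 2 + 2 + 2`) and agree at 0, 1, 2.
  induction n using Nat.strong_induction_on with
  | _ n ih =>
    match n, ih with
    | 0, _ => norm_num [J3, j3]
    | 1, _ => norm_num [J3, j3]
    | 2, _ => norm_num [J3, j3]
    | m + 3, ih =>
      have h0 := ih m (by omega)
      have h1 := ih (m + 1) (by omega)
      have h2 := ih (m + 2) (by omega)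
      rw [J3, j3]
      linear_combination h2 + h1 + 2 * h0
end

section
/- For every natural number n ≥ 3, one has j_n − 3·J_n = 2·j_{n−3}, where J_n is the n-th third-order Jacobsthal number and j_n is the n-th third-order Jacobsthal-Lucas number. -/
/-- Index-shifted form, free of natural-number subtraction: both sides satisfy the common
third-order linear recurrence, so agreement at `m = 0, 1, 2` suffices. -/
theorem j3_sub_J3_shift : ∀ m : ℕ, j3 (m + 3) - 3 * J3 (m + 3) = 2 * j3 m
  | 0 => by simp [j3, J3]
  | 1 => by simp [j3, J3]
  | 2 => by simp [j3, J3]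
  | m + 3 => by
    have h0 := j3_sub_J3_shift m
    have h1 := j3_sub_J3_shift (m + 1)
    have h2 := j3_sub_J3_shift (m + 2)
    have ej : j3 (m + 3 + 3) = j3 (m + 2 + 3) + j3 (m + 1 + 3) + 2 * j3 (m + 3) := by
      rw [j3]
    have eJ : J3 (m + 3 + 3) = J3 (m + 2 + 3) + J3 (m + 1 + 3) + 2 * J3 (m + 3) := by
      rw [J3]
    have e : j3 (m + 3) = j3 (m + 2) + j3 (m + 1) + 2 * j3 m := by
      rw [j3]
    linarith

theorem stmt_1 (n : ℕ) (hn : 3 ≤ n) : j3 n - 3 * J3 n = 2 * j3 (n - 3) := by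
  obtain ⟨m, rfl⟩ := Nat.exists_eq_add_of_le' hn
  exact j3_sub_J3_shift m
end

section
/- For every natural number n ≥ 0, the difference J_{n+2} − 4·J_n (computed in the integers) equals −2 if n ≡ 1 (mod 3), and equals 1 if n ≢ 1 (mod 3), where J_n is the n-th third-order Jacobsthal number. -/
theorem stmt_2 (n : ℕ) :
    J3 (n + 2) - 4 * J3 n = if n % 3 = 1 then -2 else 1 := by
  -- The difference satisfies the same linear recurrence as `J3`, and so does the right-hand side:
  -- its values over a period are `1, -2, 1`, which sum to zero, so that
  -- `d (n + 2) + d (n + 1) + 2 * d n = d n = d (n + 3)`.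
  induction n using Nat.strong_induction_on with
  | _ n ih =>
    match n, ih with
    | 0, _ => simp [J3]
    | 1, _ => simp [J3]
    | 2, _ => simp [J3]
    | n + 3, ih =>
      have h0 := ih n (by omega)
      have h1 : J3 (n + 3) - 4 * J3 (n + 1) = _ := ih (n + 1) (by omega)
      have h2 : J3 (n + 4) - 4 * J3 (n + 2) = _ := ih (n + 2) (by omega)
      have e3 : J3 (n + 3) = J3 (n + 2) + J3 (n + 1) + 2 * J3 n := by rw [J3]
      have e5 : J3 (n + 5) = J3 (n + 4) + J3 (n + 3) + 2 * J3 (n + 2) := by rw [J3]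
      change J3 (n + 5) - 4 * J3 (n + 3) = _
      split_ifs at h0 h1 h2 ⊢ <;> omega
end

section
/- For every natural number n ≥ 0, the difference j_n − 4·J_n (computed in the integers) equals 2 if n ≡ 0 (mod 3), equals −3 if n ≡ 1 (mod 3), and equals 1 if n ≡ 2 (mod 3), where J_n is the n-th third-order Jacobsthal number and j_n is the n-th third-order Jacobsthal-Lucas number. -/
/-- Any three consecutive differences `j_n - 4 J_n` sum to zero, because the recurrence doubles
this sum at each step and it starts at `2 - 3 + 1 = 0`. -/
lemma diff_sum_eq_zero (n : ℕ) :
    (j3 n - 4 * J3 n) + (j3 (n + 1) - 4 * J3 (n + 1)) + (j3 (n + 2) - 4 * J3 (n + 2)) = 0 := by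
  induction n with
  | zero => simp [j3, J3]
  | succ n ih =>
    have hj : j3 (n + 3) = j3 (n + 2) + j3 (n + 1) + 2 * j3 n := by rw [j3]
    have hJ : J3 (n + 3) = J3 (n + 2) + J3 (n + 1) + 2 * J3 n := by rw [J3]
    change (j3 (n + 1) - 4 * J3 (n + 1)) + (j3 (n + 2) - 4 * J3 (n + 2))
      + (j3 (n + 3) - 4 * J3 (n + 3)) = 0
    linarith

lemma diff_add_three (n : ℕ) : j3 (n + 3) - 4 * J3 (n + 3) = j3 n - 4 * J3 n := by
  have h := diff_sum_eq_zero n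
  rw [j3, J3]
  linarith

theorem stmt_3 (n : ℕ) :
    j3 n - 4 * J3 n =
      if n % 3 = 0 then 2 else if n % 3 = 1 then -3 else 1 := by
  induction n using Nat.strong_induction_on with
  | _ n ih =>
    match n with
    | 0 => simp [j3, J3]
    | 1 => simp [j3, J3]
    | 2 => simp [j3, J3]
    | n + 3 =>
      rw [diff_add_three, ih n (by omega), Nat.add_mod_right]
end

section
/- For every natural number n ≥ 0, one has j_{n+1} + j_n = 3·J_{n+2}, where J_n is the n-th third-order Jacobsthal number and j_n is the n-th third-order Jacobsthal-Lucas number. -/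
theorem stmt_4 (n : ℕ) : j3 (n + 1) + j3 n = 3 * J3 (n + 2) := by
  -- Both sides satisfy the same linear third-order recurrence, so three initial values suffice.
  induction n using Nat.strong_induction_on with
  | _ n ih =>
    match n, ih with
    | 0, _ => simp [j3, J3]
    | 1, _ => simp [j3, J3]
    | 2, _ => simp [j3, J3]
    | m + 3, ih =>
      have h0 := ih m (by omega)
      have h1 := ih (m + 1) (by omega)
      have h2 := ih (m + 2) (by omega)
      have e1 : j3 (m + 3 + 1) = j3 (m + 3) + j3 (m + 2) + 2 * j3 (m + 1) := j3.eq_4 (m + 1)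
      have e2 : j3 (m + 3) = j3 (m + 2) + j3 (m + 1) + 2 * j3 m := j3.eq_4 m
      have e3 : J3 (m + 3 + 2) = J3 (m + 4) + J3 (m + 3) + 2 * J3 (m + 2) := J3.eq_4 (m + 2)
      simp only [Nat.add_assoc, Nat.reduceAdd] at *
      linarith
end

section
/- For every natural number n ≥ 0, the difference j_n − J_{n+2} (computed in the integers) equals 1 if n ≡ 0 (mod 3), equals −1 if n ≡ 1 (mod 3), and equals 0 if n ≡ 2 (mod 3), where J_n is the n-th third-order Jacobsthal number and j_n is the n-th third-order Jacobsthal-Lucas number. -/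
/-- The difference `d n = j3 n - J3 (n + 2)` satisfies the common recurrence, and its initial
values `1, -1, 0` sum to zero; hence any three consecutive values sum to zero. -/
lemma diff_sum_three (n : ℕ) :
    (j3 n - J3 (n + 2)) + (j3 (n + 1) - J3 (n + 3)) + (j3 (n + 2) - J3 (n + 4)) = 0 := by
  induction n with
  | zero => simp [j3, J3]
  | succ k ih =>
    have h1 : j3 (k + 3) = j3 (k + 2) + j3 (k + 1) + 2 * j3 k := by rw [j3]
    have h2 : J3 (k + 5) = J3 (k + 4) + J3 (k + 3) + 2 * J3 (k + 2) := by rw [J3]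
    change (j3 (k + 1) - J3 (k + 3)) + (j3 (k + 2) - J3 (k + 4)) + (j3 (k + 3) - J3 (k + 5)) = 0
    linarith

theorem stmt_5 (n : ℕ) :
    j3 n - J3 (n + 2) =
      if n % 3 = 0 then 1 else if n % 3 = 1 then -1 else 0 := by
  induction n using Nat.strong_induction_on with
  | _ n ih =>
    match n, ih with
    | 0, _ => simp [j3, J3]
    | 1, _ => simp [j3, J3]
    | 2, _ => simp [j3, J3]
    | k + 3, ih =>
      have h1 : j3 (k + 3) = j3 (k + 2) + j3 (k + 1) + 2 * j3 k := by rw [j3]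
      have h2 : J3 (k + 5) = J3 (k + 4) + J3 (k + 3) + 2 * J3 (k + 2) := by rw [J3]
      have hs := diff_sum_three k
      -- The recurrence reads `d (k + 3) = (d (k + 2) + d (k + 1) + d k) + d k`.
      have hper : j3 (k + 3) - J3 (k + 5) = j3 k - J3 (k + 2) := by linarith
      rw [Nat.add_mod_right, ← ih k (by lia)]
      exact hper
end

section
/- For every natural number n ≥ 3, one has (j_{n−3})² + 3·J_n·j_n = 4^n, where J_n is the n-th third-order Jacobsthal number and j_n is the n-th third-order Jacobsthal-Lucas number. -/
theorem j3_eq (m : ℕ) : j3 m = 2 ^ (m + 3) - 3 * J3 (m + 3) := by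
  induction m using j3.induct with
  | case1 => norm_num [j3, J3]
  | case2 => norm_num [j3, J3]
  | case3 => norm_num [j3, J3]
  | case4 n h2 h1 h0 =>
    have hJ : J3 (n + 3 + 3) = J3 (n + 2 + 3) + J3 (n + 1 + 3) + 2 * J3 (n + 3) := by
      rw [J3]
    change j3 (n + 3) = 2 ^ (n + 3 + 3) - 3 * J3 (n + 3 + 3)
    rw [j3, h2, h1, h0, hJ]
    ring

theorem j3_add_three (m : ℕ) : j3 (m + 3) = j3 m + 2 ^ (m + 3) := by
  induction m using j3.induct with
  | case1 => norm_num [j3]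
  | case2 => norm_num [j3]
  | case3 => norm_num [j3]
  | case4 n h2 h1 h0 =>
    have hj : j3 (n + 3 + 3) = j3 (n + 2 + 3) + j3 (n + 1 + 3) + 2 * j3 (n + 3) := by
      rw [j3]
    have hj' : j3 (n + 3) = j3 (n + 2) + j3 (n + 1) + 2 * j3 n := by
      rw [j3]
    change j3 (n + 3 + 3) = j3 (n + 3) + 2 ^ (n + 3 + 3)
    rw [hj, h2, h1]
    linear_combination 2 * h0 - hj'

theorem stmt_6 (n : ℕ) (hn : 3 ≤ n) :
    (j3 (n - 3)) ^ 2 + 3 * J3 n * j3 n = 4 ^ n := by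
  obtain ⟨m, rfl⟩ := Nat.exists_eq_add_of_le' hn
  have h4 : (4 : ℤ) ^ (m + 3) = (2 ^ (m + 3)) ^ 2 := by
    rw [← pow_mul, mul_comm, pow_mul]
    norm_num
  rw [Nat.add_sub_cancel, j3_add_three, j3_eq, h4]
  ring
end

section
/- For every natural number n ≥ 0, the sum ∑_{k=0}^{n} J_k equals J_{n+1} if n ≢ 0 (mod 3), and equals J_{n+1} − 1 if n ≡ 0 (mod 3), where J_n is the n-th third-order Jacobsthal number. -/
theorem stmt_7 (n : ℕ) :
    ∑ k ∈ Finset.range (n + 1), J3 k =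
      if n % 3 = 0 then J3 (n + 1) - 1 else J3 (n + 1) := by
  induction n using Nat.strong_induction_on with
  | _ n ih =>
    match n, ih with
    | 0, _ => simp [J3]
    | 1, _ => simp [Finset.sum_range_succ, J3]
    | 2, _ => simp [Finset.sum_range_succ, J3]
    | m + 3, ih =>
      -- Rewriting the recurrence as `J (m+4) - J (m+1) = J (m+1) + J (m+2) + J (m+3)` shows that
      -- both sides grow by the same amount from `m` to `m + 3`; the residue mod 3 is unchanged.
      have h := ih m (by omega)
      have hJ : J3 (m + 3 + 1) = J3 (m + 3) + J3 (m + 2) + 2 * J3 (m + 1) := by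
        rw [J3]
      rw [Finset.sum_range_succ, Finset.sum_range_succ, Finset.sum_range_succ, h, hJ,
        Nat.add_mod_right]
      split_ifs <;> ring
end

section
/- For every natural number n ≥ 3, one has (j_n)² − 9·(J_n)² = 2^{n+2}·j_{n−3}, where J_n is the n-th third-order Jacobsthal number and j_n is the n-th third-order Jacobsthal-Lucas number. -/
theorem j3_add_three_mul_J3 : ∀ n : ℕ, j3 n + 3 * J3 n = 2 ^ (n + 1)
  | 0 => by simp [j3, J3]
  | 1 => by simp [j3, J3]
  | 2 => by simp [j3, J3]
  | n + 3 => by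
    have h0 := j3_add_three_mul_J3 n
    have h1 := j3_add_three_mul_J3 (n + 1)
    have h2 := j3_add_three_mul_J3 (n + 2)
    rw [j3, J3]
    linear_combination h2 + h1 + 2 * h0

theorem j3_sub_three_mul_J3 : ∀ n : ℕ, j3 (n + 3) - 3 * J3 (n + 3) = 2 * j3 n
  | 0 => by simp [j3, J3]
  | 1 => by simp [j3, J3]
  | 2 => by simp [j3, J3]
  | n + 3 => by
    have h0 := j3_sub_three_mul_J3 n
    have h1 := j3_sub_three_mul_J3 (n + 1)
    have h2 := j3_sub_three_mul_J3 (n + 2)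
    rw [j3.eq_4 (n + 3), J3.eq_4 (n + 3)]
    linear_combination h2 + h1 + 2 * h0 - 2 * j3.eq_4 n

theorem stmt_8 (n : ℕ) (hn : 3 ≤ n) :
    (j3 n) ^ 2 - 9 * (J3 n) ^ 2 = 2 ^ (n + 2) * j3 (n - 3) := by
  obtain ⟨m, rfl⟩ := Nat.exists_eq_add_of_le' hn
  rw [Nat.add_sub_cancel]
  linear_combination (j3 (m + 3) - 3 * J3 (m + 3)) * j3_add_three_mul_J3 (m + 3) +
    2 ^ (m + 4) * j3_sub_three_mul_J3 m
end

section
/- For every natural number n ≥ 0, one has 7·J_n = 2^{n+1} − V_n and 7·j_n = 2^{n+3} + 3·V_n, where J_n is the n-th third-order Jacobsthal number, j_n is the n-th third-order Jacobsthal-Lucas number, and (V_n) is the integer sequence defined by V_0 = 2, V_1 = −3 and V_{n+2} = −V_{n+1} − V_n. -/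
/-- The sequence V with V 0 = 2, V 1 = -3, V (n+2) = -V (n+1) - V n. -/
def V3 : ℕ → ℤ
  | 0 => 2
  | 1 => -3
  | n + 2 => -V3 (n + 1) - V3 n

theorem stmt_9 (n : ℕ) :
    7 * J3 n = 2 ^ (n + 1) - V3 n ∧ 7 * j3 n = 2 ^ (n + 3) + 3 * V3 n := by
  -- Both sides satisfy the third-order recurrence: its characteristic polynomial
  -- `x ^ 3 - x ^ 2 - x - 2` factors as `(x - 2) * (x ^ 2 + x + 1)`.
  induction n using J3.induct with
  | case1 => simp [J3, j3, V3]
  | case2 => simp [J3, j3, V3]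
  | case3 => simp [J3, j3, V3]
  | case4 n ih2 ih1 ih0 =>
    obtain ⟨a2, b2⟩ := ih2
    obtain ⟨a1, b1⟩ := ih1
    obtain ⟨a0, b0⟩ := ih0
    have h2 : V3 (n + 2) = -V3 (n + 1) - V3 n := by rw [V3]
    have h3 : V3 (n + 3) = -V3 (n + 2) - V3 (n + 1) := by rw [V3]
    rw [J3, j3]
    simp only [Nat.succ_eq_add_one]
    constructor
    · linear_combination a2 + a1 + 2 * a0 + h3 - 2 * h2
    · linear_combination b2 + b1 + 2 * b0 - 3 * h3 + 6 * h2
end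

section
/- (Catalan identity for third-order Jacobsthal numbers) For all natural numbers n and r with n ≥ r and r ≥ 1, the following identity of rational numbers holds: (J_n)² − J_{n−r}·J_{n+r} = (1/49)·( 2^{n+1}·( 2^r·V_{n−r} − 2·V_n + 2^{−r}·V_{n+r} ) + 7·(U_r)² ), where U_r = j_{r−1} − J_{r+1}. -/
theorem seven_mul_J3 (n : ℕ) : 7 * J3 n = 2 ^ (n + 1) - V3 n := by
  induction n using J3.induct with
  | case1 => simp [J3, V3]
  | case2 => simp [J3, V3]
  | case3 => simp [J3, V3]
  | case4 n h2 h1 h0 =>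
    have e3 : V3 (n + 3) = -V3 (n + 2) - V3 (n + 1) := by rw [V3]
    have e2 : V3 (n + 2) = -V3 (n + 1) - V3 n := by rw [V3]
    change 7 * J3 (n + 3) = 2 ^ (n + 3 + 1) - V3 (n + 3)
    rw [J3, e3]
    ring_nf at *
    linarith

theorem V3_add_three (n : ℕ) : V3 (n + 3) = V3 n := by
  rw [V3, V3]
  ring

theorem V3_mod (n : ℕ) : V3 n = V3 (n % 3) :=
  ((show Function.Periodic V3 3 from V3_add_three).map_mod_nat n).symm

/-- The sequence `U_{n+1} = j_n - J_{n+2}` satisfies the second-order recurrence of `V`: the factor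
`x - 2` of the characteristic polynomial does not contribute. -/
theorem U_rec (n : ℕ) :
    (j3 (n + 2) - J3 (n + 4)) + (j3 (n + 1) - J3 (n + 3)) + (j3 n - J3 (n + 2)) = 0 := by
  induction n with
  | zero => simp [j3, J3]
  | succ n ih =>
    have e1 : j3 (n + 3) = j3 (n + 2) + j3 (n + 1) + 2 * j3 n := by rw [j3]
    have e2 : J3 (n + 5) = J3 (n + 4) + J3 (n + 3) + 2 * J3 (n + 2) := by rw [J3]
    change (j3 (n + 3) - J3 (n + 5)) + (j3 (n + 2) - J3 (n + 4)) + (j3 (n + 1) - J3 (n + 3)) = 0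
    linarith

theorem U_mod (n : ℕ) : j3 n - J3 (n + 2) = j3 (n % 3) - J3 (n % 3 + 2) := by
  have h : Function.Periodic (fun n => j3 n - J3 (n + 2)) 3 := by
    intro n
    have h0 := U_rec n
    have h1 := U_rec (n + 1)
    change j3 (n + 3) - J3 (n + 5) = j3 n - J3 (n + 2)
    change (j3 (n + 3) - J3 (n + 5)) + (j3 (n + 2) - J3 (n + 4)) +
      (j3 (n + 1) - J3 (n + 3)) = 0 at h1
    linarith
  exact (h.map_mod_nat n).symm

/-- Catalan identity for `V`, with `r = s + 1` and `n = m + s + 1`. -/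
theorem V3_catalan (m s : ℕ) :
    V3 (m + s + 1) ^ 2 - V3 m * V3 (m + 2 * s + 2) = 7 * (j3 s - J3 (s + 2)) ^ 2 := by
  have hm : m % 3 < 3 := Nat.mod_lt _ (by norm_num)
  have hs : s % 3 < 3 := Nat.mod_lt _ (by norm_num)
  have ha : (m + s + 1) % 3 = (m % 3 + s % 3 + 1) % 3 := by omega
  have hb : (m + 2 * s + 2) % 3 = (m % 3 + 2 * (s % 3) + 2) % 3 := by omega
  rw [V3_mod (m + s + 1), V3_mod m, V3_mod (m + 2 * s + 2), U_mod s, ha, hb]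
  generalize m % 3 = a at *
  generalize s % 3 = b at *
  interval_cases a <;> interval_cases b <;> simp [V3, j3, J3]

theorem stmt_10 (n r : ℕ) (hrn : r ≤ n) (hr : 1 ≤ r) :
    ((J3 n : ℚ)) ^ 2 - (J3 (n - r) : ℚ) * (J3 (n + r) : ℚ) =
      (1 / 49) * ((2 : ℚ) ^ (n + 1) *
          ((2 : ℚ) ^ r * (V3 (n - r) : ℚ) - 2 * (V3 n : ℚ) +
            (2 : ℚ) ^ (-(r : ℤ)) * (V3 (n + r) : ℚ)) +
        7 * ((j3 (r - 1) : ℚ) - (J3 (r + 1) : ℚ)) ^ 2) := by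
  have binet (k : ℕ) : (J3 k : ℚ) = (2 ^ (k + 1) - V3 k) / 7 := by
    have h : (7 * J3 k : ℚ) = 2 ^ (k + 1) - V3 k := by exact_mod_cast seven_mul_J3 k
    linarith
  obtain ⟨s, rfl⟩ := Nat.exists_eq_add_of_le' hr
  obtain ⟨m, rfl⟩ := Nat.exists_eq_add_of_le' hrn
  have hV : (V3 (m + (s + 1)) : ℚ) ^ 2 - V3 m * V3 (m + (s + 1) + (s + 1)) =
      7 * ((j3 s : ℚ) - J3 (s + 1 + 1)) ^ 2 := by
    have h := V3_catalan m s
    rw [show m + 2 * s + 2 = m + (s + 1) + (s + 1) by ring] at h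
    exact_mod_cast h
  rw [Nat.add_sub_cancel, Nat.add_sub_cancel, ← hV, binet, binet m, binet (m + (s + 1) + (s + 1)),
    zpow_neg, zpow_natCast]
  field_simp
  ring
end

section
/- (Binet formula) Let a, b, c be real numbers and let (𝕁_n) be the generalized third-order Jacobsthal sequence with parameters a, b, c. Let ω₁ = (−1 + i√3)/2 and ω₂ = (−1 − i√3)/2 be the complex conjugate primitive cube roots of unity. Then for every n ≥ 0, regarding 𝕁_n as a complex number, 𝕁_n = ( (c + b + a) / ((2 − ω₁)(2 − ω₂)) )·2ⁿ − ( (c − (2 + ω₂)b + 2ω₂a) / ((2 − ω₁)(ω₁ − ω₂)) )·ω₁ⁿ + ( (c − (2 + ω₁)b + 2ω₁a) / ((2 − ω₂)(ω₁ − ω₂)) )·ω₂ⁿ. -/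
open Complex

/-!
The characteristic polynomial `X³ - X² - X - 2 = (X - 2)(X² + X + 1)` has the three distinct roots
`2, ω₁, ω₂`. Each of `2ⁿ, ω₁ⁿ, ω₂ⁿ` therefore satisfies the recurrence, and so does the right-hand
side. It remains to compare the values at `n = 0, 1, 2`; since `ω₁ + ω₂ = -1` and `ω₁ ω₂ = 1`,
the numerator `c + b + a` equals `c - (ω₁ + ω₂) b + ω₁ ω₂ a`, and the initial values become
identities of rational functions valid for any distinct nodes `2, ω₁, ω₂`.
-/

theorem stmt_15 (a b c : ℝ) (Jg : ℕ → ℝ)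
    (h0 : Jg 0 = a) (h1 : Jg 1 = b) (h2 : Jg 2 = c)
    (hrec : ∀ n : ℕ, Jg (n + 3) = Jg (n + 2) + Jg (n + 1) + 2 * Jg n)
    (ω₁ ω₂ : ℂ)
    (hω₁ : ω₁ = (-1 + I * Real.sqrt 3) / 2)
    (hω₂ : ω₂ = (-1 - I * Real.sqrt 3) / 2) (n : ℕ) :
    (Jg n : ℂ) =
      ((c + b + a : ℝ) / ((2 - ω₁) * (2 - ω₂))) * 2 ^ n -
        (((c : ℂ) - (2 + ω₂) * b + 2 * ω₂ * a) / ((2 - ω₁) * (ω₁ - ω₂))) * ω₁ ^ n +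
        (((c : ℂ) - (2 + ω₁) * b + 2 * ω₁ * a) / ((2 - ω₂) * (ω₁ - ω₂))) * ω₂ ^ n := by
  have hsq : ((Real.sqrt 3 : ℝ) : ℂ) ^ 2 = 3 := by
    rw [← ofReal_pow, Real.sq_sqrt (by norm_num)]; norm_num
  have hsum : ω₁ + ω₂ = -1 := by rw [hω₁, hω₂]; ring
  have hprod : ω₁ * ω₂ = 1 := by
    rw [hω₁, hω₂]
    linear_combination (-(Real.sqrt 3 : ℂ) ^ 2 / 4) * I_sq + hsq / 4
  have hr₁ : ω₁ ^ 2 + ω₁ + 1 = 0 := by linear_combination ω₁ * hsum - hprod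
  have hr₂ : ω₂ ^ 2 + ω₂ + 1 = 0 := by linear_combination ω₂ * hsum - hprod
  -- `X² + X + 1` takes the value `7` at `2`, and its discriminant is `-3`.
  have hd₁ : 2 - ω₁ ≠ 0 := by
    intro h
    have h7 : (7 : ℂ) = 0 := by linear_combination hr₁ + (ω₁ + 3) * h
    norm_num at h7
  have hd₂ : 2 - ω₂ ≠ 0 := by
    intro h
    have h7 : (7 : ℂ) = 0 := by linear_combination hr₂ + (ω₂ + 3) * h
    norm_num at h7
  have hd : ω₁ - ω₂ ≠ 0 := by
    intro h
    have h3 : (-3 : ℂ) = 0 := by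
      linear_combination (ω₁ - ω₂) * h - (ω₁ + ω₂ - 1) * hsum + 4 * hprod
    norm_num at h3
  have hnum : ((c + b + a : ℝ) : ℂ) = c - (ω₁ + ω₂) * b + ω₁ * ω₂ * a := by
    rw [hsum, hprod]; push_cast; ring
  rw [hnum]
  clear hω₁ hω₂ hnum
  induction n using Nat.strong_induction_on with
  | _ n ih =>
    match n, ih with
    | 0, _ => rw [h0]; field_simp; ring
    | 1, _ => rw [h1]; field_simp; ring
    | 2, _ => rw [h2]; field_simp; ring
    | m + 3, ih =>
      rw [hrec]
      push_cast
      rw [ih (m + 2) (by omega), ih (m + 1) (by omega), ih m (by omega)]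
      -- The coefficients play no role in the recurrence step.
      generalize (_ : ℂ) / ((2 - ω₁) * (2 - ω₂)) = A
      generalize (_ : ℂ) / ((2 - ω₁) * (ω₁ - ω₂)) = B
      generalize (_ : ℂ) / ((2 - ω₂) * (ω₁ - ω₂)) = C
      linear_combination B * ω₁ ^ m * (ω₁ - 2) * hr₁ - C * ω₂ ^ m * (ω₂ - 2) * hr₂
end

section
/- Let a, b, c be real numbers and let (𝕁_n) be the generalized third-order Jacobsthal sequence with parameters a, b, c. Let m ≥ 1 and r be natural numbers with r ≥ m and m not divisible by 3, and set c_m = 2 if m ≡ 0 (mod 3) and c_m = −1 otherwise (so c_m = ω₁^m + ω₂^m for the primitive cube roots of unity ω₁, ω₂), σ = 2^{m+1} + (1 − 2^m)·c_m − 2, and μ(m) = 2^m + c_m. Then for every natural number n ≥ 0, σ·∑_{k=0}^{n} 𝕁_{mk+r} = 𝕁_{m(n+1)+r} − 𝕁_r + 2^m·𝕁_{mn+r} − 2^m·𝕁_{r−m} − μ(m)·(𝕁_{m(n+1)+r} − 𝕁_r) + 𝕁_{m(n+2)+r} − 𝕁_{r+m}. -/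
/-!
The characteristic polynomial is `(x - 2)(x² + x + 1)`, so `Jg n = A * 2 ^ n + V n` with
`V n + V (n + 1) + V (n + 2) = 0`; in particular `V` has period 3. When `3 ∤ m`, stepping by `m`
permutes the residues mod 3, so `V n + V (n + m) + V (n + 2 * m) = 0` as well
(`stepSum_eq_zero`). Hence the subsequence with step `m` satisfies the recurrence with
characteristic polynomial `(x - 2 ^ m)(x² + x + 1)` (`jacobsthal_step`). The value of this
polynomial at `1` is `-σ`, and the sum formula follows by telescoping the step recurrence,
that is, by induction on `n`.
-/

lemma period_three {V : ℕ → ℝ} (hV : ∀ n, V n + V (n + 1) + V (n + 2) = 0) (n q : ℕ) :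
    V (n + 3 * q) = V n := by
  induction q with
  | zero => rfl
  | succ q ih =>
    have e1 := hV (n + 3 * q)
    have e2 := hV (n + 3 * q + 1)
    rw [show n + 3 * (q + 1) = n + 3 * q + 1 + 2 by ring]
    linarith

lemma stepSum_eq_zero {V : ℕ → ℝ} (hV : ∀ n, V n + V (n + 1) + V (n + 2) = 0) {m : ℕ}
    (h3 : ¬ 3 ∣ m) (n : ℕ) : V n + V (n + m) + V (n + 2 * m) = 0 := by
  obtain ⟨q, rfl | rfl⟩ : ∃ q, m = 3 * q + 1 ∨ m = 3 * q + 2 := ⟨m / 3, by omega⟩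
  · rw [show n + (3 * q + 1) = n + 1 + 3 * q by ring,
      show n + 2 * (3 * q + 1) = n + 2 + 3 * (2 * q) by ring,
      period_three hV, period_three hV]
    exact hV n
  · rw [show n + (3 * q + 2) = n + 2 + 3 * q by ring,
      show n + 2 * (3 * q + 2) = n + 1 + 3 * (2 * q + 1) by ring,
      period_three hV, period_three hV]
    linarith [hV n]

/-- The recurrence with step `m`, whose characteristic polynomial is
`(x - 2 ^ m)(x² + x + 1)`. -/
lemma jacobsthal_step {J : ℕ → ℝ}
    (hrec : ∀ n : ℕ, J (n + 3) = J (n + 2) + J (n + 1) + 2 * J n) {m : ℕ} (h3 : ¬ 3 ∣ m)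
    (n : ℕ) :
    J (n + 3 * m) = (2 ^ m - 1) * J (n + 2 * m) + (2 ^ m - 1) * J (n + m) + 2 ^ m * J n := by
  -- Applying `x² + x + 1` kills the cube roots of unity and multiplies `2 ^ n` by `7`.
  have hS : ∀ n, J n + J (n + 1) + J (n + 2) = 2 ^ n * (J 0 + J 1 + J 2) := by
    intro n
    induction n with
    | zero => simp
    | succ n ih =>
      rw [show n + 1 + 1 = n + 2 by ring, show n + 1 + 2 = n + 3 by ring, hrec, pow_succ]
      linarith
  obtain ⟨A, hA⟩ : ∃ A, J 0 + J 1 + J 2 = 7 * A := ⟨(J 0 + J 1 + J 2) / 7, by ring⟩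
  have hV : ∀ n, (fun k => J k - A * 2 ^ k) n + (fun k => J k - A * 2 ^ k) (n + 1)
      + (fun k => J k - A * 2 ^ k) (n + 2) = 0 := by
    intro n
    have h := hS n
    rw [hA] at h
    simp only [pow_add]
    linarith
  have e1 := stepSum_eq_zero hV h3 n
  have e2 := stepSum_eq_zero hV h3 (n + m)
  rw [show n + m + m = n + 2 * m by ring, show n + m + 2 * m = n + 3 * m by ring] at e2
  simp only [pow_add, mul_comm _ m, pow_mul] at e1 e2 ⊢
  linear_combination e2 - 2 ^ m * e1

theorem stmt_17 (a b c : ℝ) (Jg : ℕ → ℝ)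
    (h0 : Jg 0 = a) (h1 : Jg 1 = b) (h2 : Jg 2 = c)
    (hrec : ∀ n : ℕ, Jg (n + 3) = Jg (n + 2) + Jg (n + 1) + 2 * Jg n)
    (m r : ℕ) (hm : 1 ≤ m) (hrm : m ≤ r) (h3 : ¬ (3 ∣ m))
    (cm σ μ : ℝ)
    (hcm : cm = if m % 3 = 0 then 2 else -1)
    (hσ : σ = 2 ^ (m + 1) + (1 - 2 ^ m) * cm - 2)
    (hμ : μ = 2 ^ m + cm) (n : ℕ) :
    σ * ∑ k ∈ Finset.range (n + 1), Jg (m * k + r) =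
      Jg (m * (n + 1) + r) - Jg r + 2 ^ m * Jg (m * n + r) - 2 ^ m * Jg (r - m) -
        μ * (Jg (m * (n + 1) + r) - Jg r) + Jg (m * (n + 2) + r) - Jg (r + m) := by
  rw [if_neg (by omega)] at hcm
  subst hcm hσ hμ
  -- Writing `r = s + m` turns the truncated subtraction `r - m` into `s`.
  obtain ⟨s, rfl⟩ := Nat.exists_eq_add_of_le' hrm
  rw [Nat.add_sub_cancel]
  induction n with
  | zero =>
    have e := jacobsthal_step hrec h3 s
    simp only [zero_add, Finset.sum_range_one, mul_zero, mul_one]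
    rw [show m + (s + m) = s + 2 * m by ring, show m * 2 + (s + m) = s + 3 * m by ring,
      show s + m + m = s + 2 * m by ring, e]
    ring
  | succ n ih =>
    have e := jacobsthal_step hrec h3 (m * n + (s + m))
    rw [show m * n + (s + m) + 3 * m = m * (n + 1 + 2) + (s + m) by ring,
      show m * n + (s + m) + 2 * m = m * (n + 2) + (s + m) by ring,
      show m * n + (s + m) + m = m * (n + 1) + (s + m) by ring] at e
    rw [Finset.sum_range_succ, mul_add, ih, e, show n + 1 + 1 = n + 2 by ring]
    ring
end

section
/- (Gelin-Cesàro identity for the generalized third-order Jacobsthal sequence) Let a, b, c be real numbers, (𝕁_n) the generalized third-order Jacobsthal sequence with parameters a, b, c, ρ = a + b + c, and ω = 4a² + 3b² + c² − 2ac − 3bc. Let (𝕍_n) be defined by 𝕍_0 = c + b − 6a, 𝕍_1 = 2c − 5b + 2a, 𝕍_{n+2} = −𝕍_{n+1} − 𝕍_n, and set 𝕎_{n+2} = (5·𝕍_{n+1} − 3·𝕍_n)/7. Then for every natural number n ≥ 2: (𝕁_n)⁴ − 𝕁_{n−2}·𝕁_{n−1}·𝕁_{n+1}·𝕁_{n+2}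 = (1/7)·( (𝕁_n)²·( 2ω + 2^{n−2}·ρ·(3·𝕎_{n+2} − 2·𝕎_{n+1}) ) − (1/7)·( ω² + 2^{n−2}·ρ·ω·(3·𝕎_{n+2} − 2·𝕎_{n+1}) − 3·2^{2n−3}·ρ²·𝕎_{n+1}·𝕎_{n+2} ) ). -/
/-!
The characteristic roots of the recurrence are `2` and the two primitive cube roots of unity, which
gives the Binet-type formula `7 𝕁_n = ρ 2 ^ n - 𝕍_n`. The sequence `𝕍` has the conserved quantity
`𝕍_n ^ 2 + 𝕍_n 𝕍_{n+1} + 𝕍_{n+1} ^ 2 = 7 ω`. Together they yield the two Catalan-type identities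
`7 (𝕁_n ^ 2 - 𝕁_{n-1} 𝕁_{n+1}) = ω - 2 ^ (n-1) ρ 𝕎_{n+1}` and
`7 (𝕁_n ^ 2 - 𝕁_{n-2} 𝕁_{n+2}) = ω + 3 * 2 ^ (n-2) ρ 𝕎_{n+2}`.
The Gelin-Cesàro identity follows by multiplying the resulting expressions for
`𝕁_{n-1} 𝕁_{n+1}` and `𝕁_{n-2} 𝕁_{n+2}`.
-/

theorem stmt_19 (a b c : ℝ) (Jg : ℕ → ℝ)
    (h0 : Jg 0 = a) (h1 : Jg 1 = b) (h2 : Jg 2 = c)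
    (hrec : ∀ n : ℕ, Jg (n + 3) = Jg (n + 2) + Jg (n + 1) + 2 * Jg n)
    (V : ℕ → ℝ) (hV0 : V 0 = c + b - 6 * a) (hV1 : V 1 = 2 * c - 5 * b + 2 * a)
    (hVrec : ∀ n : ℕ, V (n + 2) = -V (n + 1) - V n)
    (n : ℕ) (hn : 2 ≤ n) (W1 W2 : ℝ)
    (hW1 : 7 * W1 = 5 * V n - 3 * V (n - 1))
    (hW2 : 7 * W2 = 5 * V (n + 1) - 3 * V n) :
    (Jg n) ^ 4 - Jg (n - 2) * Jg (n - 1) * Jg (n + 1) * Jg (n + 2) =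
      (1 / 7) * ((Jg n) ^ 2 *
          (2 * (4 * a ^ 2 + 3 * b ^ 2 + c ^ 2 - 2 * a * c - 3 * b * c) +
            (2 : ℝ) ^ (n - 2) * (a + b + c) * (3 * W2 - 2 * W1)) -
        (1 / 7) * ((4 * a ^ 2 + 3 * b ^ 2 + c ^ 2 - 2 * a * c - 3 * b * c) ^ 2 +
          (2 : ℝ) ^ (n - 2) * (a + b + c) *
            (4 * a ^ 2 + 3 * b ^ 2 + c ^ 2 - 2 * a * c - 3 * b * c) *
            (3 * W2 - 2 * W1) -
          3 * (2 : ℝ) ^ (2 * n - 3) * (a + b + c) ^ 2 * W1 * W2)) := by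
  have binet : ∀ m : ℕ, 7 * Jg m = (a + b + c) * 2 ^ m - V m := by
    have key : ∀ m : ℕ, 7 * Jg m = (a + b + c) * 2 ^ m - V m ∧
        7 * Jg (m + 1) = (a + b + c) * 2 ^ (m + 1) - V (m + 1) ∧
        7 * Jg (m + 2) = (a + b + c) * 2 ^ (m + 2) - V (m + 2) := by
      intro m
      induction m with
      | zero =>
        have := hVrec 0
        simp only [zero_add] at this ⊢
        rw [this, h0, h1, h2, hV0, hV1]
        refine ⟨?_, ?_, ?_⟩ <;> ring
      | succ m ih =>
        obtain ⟨i0, i1, i2⟩ := ih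
        refine ⟨i1, i2, ?_⟩
        have e1 := hVrec m
        have e2 := hVrec (m + 1)
        have e3 := hrec m
        simp only [add_assoc, Nat.reduceAdd] at *
        rw [e3, e2]
        simp only [pow_add] at *
        linarith
    exact fun m => (key m).1
  have inv : ∀ m : ℕ, V m ^ 2 + V m * V (m + 1) + V (m + 1) ^ 2 =
      7 * (4 * a ^ 2 + 3 * b ^ 2 + c ^ 2 - 2 * a * c - 3 * b * c) := by
    intro m
    induction m with
    | zero => rw [zero_add, hV0, hV1]; ring
    | succ m ih => rw [← ih, hVrec m]; ring
  obtain ⟨k, rfl⟩ : ∃ k, n = k + 2 := ⟨n - 2, by omega⟩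
  have s1 : k + 2 - 2 = k := by omega
  have s2 : k + 2 - 1 = k + 1 := by omega
  have s3 : 2 * (k + 2) - 3 = k + k + 1 := by omega
  rw [s2] at hW1
  rw [s1, s2, s3]
  have v2 := hVrec k
  have v3 : V (k + 2 + 1) = V k := by
    rw [show k + 2 + 1 = k + 1 + 2 by omega, hVrec (k + 1)]
    simp only [add_assoc, Nat.reduceAdd]
    rw [v2]; ring
  have v4 : V (k + 2 + 2) = V (k + 1) := by
    rw [hVrec (k + 2), v3, v2]; ring
  have w1 : W1 = (-5 * V k - 8 * V (k + 1)) / 7 := by linarith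
  have w2 : W2 = (8 * V k + 3 * V (k + 1)) / 7 := by linarith
  have hi := inv k
  have b0 : Jg k = ((a + b + c) * 2 ^ k - V k) / 7 := by linarith [binet k]
  have b1 : Jg (k + 1) = ((a + b + c) * 2 ^ k * 2 - V (k + 1)) / 7 := by
    have := binet (k + 1)
    rw [pow_add] at this
    linarith
  have b2 : Jg (k + 2) = ((a + b + c) * 2 ^ k * 4 + V (k + 1) + V k) / 7 := by
    have := binet (k + 2)
    rw [pow_add] at this
    linarith
  have b3 : Jg (k + 2 + 1) = ((a + b + c) * 2 ^ k * 8 - V k) / 7 := by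
    have := binet (k + 2 + 1)
    rw [pow_add, pow_add] at this
    linarith
  have b4 : Jg (k + 2 + 2) = ((a + b + c) * 2 ^ k * 16 - V (k + 1)) / 7 := by
    have := binet (k + 2 + 2)
    rw [pow_add, pow_add] at this
    linarith
  rw [pow_add, pow_add, pow_one]
  generalize (4 * a ^ 2 + 3 * b ^ 2 + c ^ 2 - 2 * a * c - 3 * b * c) = w at *
  generalize (a + b + c) = r at *
  generalize (2 : ℝ) ^ k = P at *
  have hw : w = (V k ^ 2 + V k * V (k + 1) + V (k + 1) ^ 2) / 7 := by linarith
  have cat1 : Jg (k + 1) * Jg (k + 2 + 1) =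
      Jg (k + 2) ^ 2 - (w - 2 * P * r * W1) / 7 := by
    rw [b1, b2, b3, hw, w1]; ring
  have cat2 : Jg k * Jg (k + 2 + 2) = Jg (k + 2) ^ 2 - (w + 3 * P * r * W2) / 7 := by
    rw [b0, b2, b4, hw, w2]; ring
  have regroup : Jg k * Jg (k + 1) * Jg (k + 2 + 1) * Jg (k + 2 + 2) =
      (Jg (k + 1) * Jg (k + 2 + 1)) * (Jg k * Jg (k + 2 + 2)) := by ring
  rw [regroup, cat1, cat2]
  ring
end
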